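/- arXiv:1412.8521 — 7 statements merged into one kernel-verified Lean document; each statement's English description precedes it below -/
import Mathlib

section
/- Let n ≥ 1 and let σ be an admissible permutation of {1,…,n}. Let c be the number of indices i ∈ {1,…,n} with σ(i) = i + 1 (the non-standard positions of σ). Then the signature of σ equals (−1)^c. Consequently, for any n×n lower Hessenberg matrix H over ℂ, sgn(σ)·∏_{i=1}^{n} h_{i,σ(i)} = ∏_{i=1}^{n} c_{i,σ(i)}, where c_{i,j} = h_{i,j} when j ≤ i and c_{i,i+1} = −h_{i,i+1}. -/
/-!
Induct on `n` by removing position `0`. Write `σ = swap 0 p * e'`, where `p = σ 0` and `e'` is the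
extension of a permutation `e` of the remaining positions that fixes `0`. Admissibility forces
`p = 0` or `p = 1`. Multiplying by `swap 0 p` changes the values of `e'` only at `0` and, when
`p = 1`, at the position sent by `e'` to `1`, whose value becomes `0`. That position is standard
both before and after the change, so `e` is again admissible, and it has the same non-standard
positions as `σ` apart from `0`, which is non-standard exactly when `p = 1`, i.e. exactly when
`swap 0 p` contributes a factor `-1` to the sign.
The identity for elementary products follows by distributing these factors over the product.
-/

/-- The sign formula with `(-1)^c` written as a product of local factors, the form in which
position `0` splits off. -/
theorem sign_eq_prod_of_admissible (n : ℕ) (σ : Equiv.Perm (Fin n))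
    (hadm : ∀ i : Fin n, (σ i : ℕ) ≤ (i : ℕ) + 1) :
    (Equiv.Perm.sign σ : ℤ) = ∏ i : Fin n, if (σ i : ℕ) = (i : ℕ) + 1 then (-1 : ℤ) else 1 := by
  induction n with
  | zero => simp [Subsingleton.elim σ 1]
  | succ n ih =>
    obtain ⟨⟨p, e⟩, rfl⟩ := Equiv.Perm.decomposeFin.symm.surjective σ
    have hp : (p : ℕ) ≤ 1 := by simpa using hadm 0
    -- Away from `0` the values of `σ` are those of `e` shifted by one, except where `e` has value
    -- `0` and `p = 1`.
    have hval (i : Fin n) : (Equiv.Perm.decomposeFin.symm (p, e) i.succ : ℕ) =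
        if (p : ℕ) = 1 ∧ (e i : ℕ) = 0 then 0 else (e i : ℕ) + 1 := by
      rw [Equiv.Perm.decomposeFin_symm_apply_succ, Equiv.swap_apply_def]
      simp only [Fin.ext_iff, Fin.val_succ, Fin.val_zero]
      split_ifs <;> simp_all <;> omega
    have he : ∀ i : Fin n, (e i : ℕ) ≤ (i : ℕ) + 1 := by
      intro i
      have h := hadm i.succ
      rw [hval, Fin.val_succ] at h
      split_ifs at h <;> omega
    have hiff (i : Fin n) : (Equiv.Perm.decomposeFin.symm (p, e) i.succ : ℕ) = (i.succ : ℕ) + 1 ↔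
        (e i : ℕ) = (i : ℕ) + 1 := by
      rw [hval, Fin.val_succ]
      split_ifs with hc
      · simp [hc.2]
      · omega
    rw [Fin.prod_univ_succ, Equiv.Perm.decomposeFin.symm_sign]
    simp only [hiff, ← ih e he, Equiv.Perm.decomposeFin_symm_apply_zero, Fin.val_zero, zero_add]
    have h01 : p = 0 ↔ ¬ (p : ℕ) = 1 := by
      rw [Fin.ext_iff, Fin.val_zero]; omega
    by_cases h : (p : ℕ) = 1 <;> simp [h01, h]

/-- For an admissible permutation `σ` of `{1,…,n}` (here `Fin n`, 0-based:
`σ i ≤ i + 1` for all `i`), the signature of `σ` is `(-1)^c` where `c` is the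
number of non-standard positions (positions `i` with `σ i = i + 1`).
Consequently, for any lower Hessenberg matrix `H`, the signed elementary product
`sgn(σ) ∏ H i (σ i)` equals `∏ c i (σ i)` where `c i j = H i j` for `j ≤ i` and
`c i (i+1) = -H i (i+1)`. -/
theorem sign_of_admissible_perm (n : ℕ) (hn : 1 ≤ n) (σ : Equiv.Perm (Fin n))
    (hadm : ∀ i : Fin n, (σ i : ℕ) ≤ (i : ℕ) + 1)
    (H : Matrix (Fin n) (Fin n) ℂ)
    (hess : ∀ i j : Fin n, (i : ℕ) + 1 < (j : ℕ) → H i j = 0) :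
    (Equiv.Perm.sign σ : ℤ)
        = (-1 : ℤ) ^ (Finset.univ.filter
            (fun i : Fin n => (σ i : ℕ) = (i : ℕ) + 1)).card
    ∧ ((Equiv.Perm.sign σ : ℤ) : ℂ) * ∏ i : Fin n, H i (σ i)
        = ∏ i : Fin n,
            (if (σ i : ℕ) = (i : ℕ) + 1 then -H i (σ i) else H i (σ i)) := by
  have key := sign_eq_prod_of_admissible n σ hadm
  refine ⟨by rw [key, Finset.prod_ite]; simp, ?_⟩
  rw [key]
  push_cast
  rw [← Finset.prod_mul_distrib]
  refine Finset.prod_congr rfl fun i _ => ?_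
  split_ifs <;> simp
end

section
/- For every n ≥ 1, the number of admissible permutations of {1,…,n} (equivalently, the number of non-trivial signed elementary products of an n×n lower Hessenberg matrix) equals 2^{n−1}. -/
/-!
The count doubles when `n + 1` grows to `n + 2`. `Equiv.Perm.decomposeFin` writes a permutation
uniquely as `swap 0 p * e'`, where `p` is the image of `0` and `e'` fixes `0` and acts as `e` on
the successors. Admissibility at `0` says `p ∈ {0, 1}`. For such `p`, the swap changes the value
at `x + 1` only when `e x = 0`, where it sends `1` to at most `1`; that value satisfies the bound
in either case, so admissibility at the remaining indices is exactly admissibility of `e`.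
-/

theorem admissible_decomposeFin_symm {n : ℕ} (p : Fin (n + 2)) (e : Equiv.Perm (Fin (n + 1))) :
    (∀ i : Fin (n + 2), (Equiv.Perm.decomposeFin.symm (p, e) i : ℕ) ≤ (i : ℕ) + 1) ↔
      (p = 0 ∨ p = 1) ∧ ∀ i : Fin (n + 1), (e i : ℕ) ≤ (i : ℕ) + 1 := by
  have hp : (p : ℕ) ≤ 1 ↔ p = 0 ∨ p = 1 := by
    simp only [Fin.ext_iff, Fin.val_zero, Fin.val_one]
    omega
  rw [Fin.forall_fin_succ, Equiv.Perm.decomposeFin_symm_apply_zero, Fin.val_zero, zero_add, hp]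
  refine and_congr_right fun h => forall_congr' fun i => ?_
  rw [Equiv.Perm.decomposeFin_symm_apply_succ, Equiv.swap_apply_def, if_neg (Fin.succ_ne_zero _)]
  rcases h with rfl | rfl
  · simp [Fin.succ_ne_zero]
  · split_ifs with h
    · have h' := congrArg Fin.val h
      simp only [Fin.val_succ, Fin.val_one] at h'
      simp only [Fin.val_zero]
      omega
    · simp only [Fin.val_succ]
      omega

/-- The number of admissible permutations of `{1,…,n}` (here `Fin n`, 0-based:
`σ i ≤ i + 1` for all `i`) is `2^(n-1)`. These index exactly the non-trivial
signed elementary products of an `n × n` lower Hessenberg matrix. -/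
theorem card_admissible_perms (n : ℕ) (hn : 1 ≤ n) :
    (Finset.univ.filter
        (fun σ : Equiv.Perm (Fin n) => ∀ i : Fin n, (σ i : ℕ) ≤ (i : ℕ) + 1)).card
      = 2 ^ (n - 1) := by
  induction n, hn using Nat.le_induction with
  | base => decide
  | succ n hn ih =>
    obtain ⟨m, rfl⟩ : ∃ m, n = m + 1 := ⟨n - 1, by omega⟩
    rw [Finset.card_equiv (t := ({0, 1} : Finset (Fin (m + 2))) ×ˢ
        Finset.univ.filter
          (fun e : Equiv.Perm (Fin (m + 1)) => ∀ i, (e i : ℕ) ≤ (i : ℕ) + 1))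
        Equiv.Perm.decomposeFin, Finset.card_product, ih, Finset.card_pair zero_ne_one]
    · simp only [Nat.add_sub_cancel]
      ring
    · intro σ
      obtain ⟨⟨p, e⟩, rfl⟩ := Equiv.Perm.decomposeFin.symm.surjective σ
      simp only [Finset.mem_filter, Finset.mem_univ, true_and, Equiv.apply_symm_apply,
        Finset.mem_product, Finset.mem_insert, Finset.mem_singleton]
      exact admissible_decomposeFin_symm p e
end

section
/- Let n ≥ 1 and let (i, j) be any pair with 1 ≤ i ≤ n and 1 ≤ j ≤ min(i + 1, n). Then there exists an admissible permutation σ of {1,…,n} with σ(i) = j. (Every non-trivial entry of an n×n lower Hessenberg matrix occurs as a factor of some non-trivial signed elementary product.) -/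
/-! If `j ≤ i`, the cycle `j → j + 1 → ⋯ → i → j` (`Fin.cycleIcc j i`) sends `i` to `j` and raises
every other index by at most one. The only remaining case is `j = i + 1`, where the transposition
of `i` and `j` works. -/

/-- Every non-trivial position `(i, j)` (i.e. with `j ≤ i + 1`, 0-based) of an
`n × n` lower Hessenberg matrix occurs in some admissible permutation:
there is an admissible permutation `σ` (i.e. `σ m ≤ m + 1` for all `m`)
with `σ i = j`. -/
theorem exists_admissible_perm_through (n : ℕ) (hn : 1 ≤ n) (i j : Fin n)
    (hij : (j : ℕ) ≤ (i : ℕ) + 1) :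
    ∃ σ : Equiv.Perm (Fin n),
      (∀ m : Fin n, (σ m : ℕ) ≤ (m : ℕ) + 1) ∧ σ i = j := by
  have : NeZero n := ⟨by omega⟩
  by_cases h : j ≤ i
  · refine ⟨Fin.cycleIcc j i, fun m => ?_, Fin.cycleIcc_of_last h⟩
    by_cases h1 : m < j
    · rw [Fin.cycleIcc_of_lt h1]; omega
    by_cases h2 : i < m
    · rw [Fin.cycleIcc_of_gt h2]; omega
    rw [Fin.cycleIcc_of_le_of_le (not_lt.mp h1) (not_lt.mp h2)]
    split_ifs with h3
    · have : (j : ℕ) ≤ m := not_lt.mp h1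
      omega
    -- Addition in `Fin n` is modulo `n`, which can only decrease the value.
    · rw [Fin.val_add, Fin.coe_ofNat_eq_mod]
      have := Nat.mod_le 1 n
      have := Nat.mod_le ((m : ℕ) + 1 % n) n
      omega
  · refine ⟨Equiv.swap i j, fun m => ?_, Equiv.swap_apply_left i j⟩
    have h' : (i : ℕ) < j := not_le.mp h
    rw [Equiv.swap_apply_def]
    split_ifs with h1 h2
    · subst h1; exact hij
    · subst h2; omega
    · omega
end

section
/- Let n ≥ 1, let σ be an admissible permutation of {1,…,n}, let 1 ≤ i ≤ n, and let j be an integer with 1 ≤ j ≤ min(i + 1, n). Then there exists an admissible permutation τ of {1,…,n} with τ(m) = σ(m) for all m < i and τ(i) = j if and only if j ∉ {σ(1), σ(2), …, σ(i−1)}. -/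
/-!
If `j` is not among the values of `σ` before position `i`, then it occurs at a position
`k = σ⁻¹ j ≥ i`, and `τ = σ ∘ (i k)` is the required permutation: only positions `i` and `k`
change, `τ i = j ≤ i + 1` by assumption, and `τ k = σ i ≤ i + 1 ≤ k + 1`.
The converse is injectivity of `τ`.
-/

/-- Immediate successor criterion: given an admissible permutation `σ` of `Fin n`
(0-based: `σ m ≤ m + 1`), a position `i` and a value `j` with `j ≤ i + 1`,
there is an admissible permutation `τ` agreeing with `σ` before position `i`
and with `τ i = j` if and only if `j` does not occur among `σ 0, …, σ (i-1)`. -/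
theorem immediate_successor_iff (n : ℕ) (hn : 1 ≤ n) (σ : Equiv.Perm (Fin n))
    (hadm : ∀ i : Fin n, (σ i : ℕ) ≤ (i : ℕ) + 1)
    (i j : Fin n) (hij : (j : ℕ) ≤ (i : ℕ) + 1) :
    (∃ τ : Equiv.Perm (Fin n),
        (∀ m : Fin n, (τ m : ℕ) ≤ (m : ℕ) + 1) ∧
        (∀ m : Fin n, (m : ℕ) < (i : ℕ) → τ m = σ m) ∧ τ i = j)
      ↔ ∀ m : Fin n, (m : ℕ) < (i : ℕ) → σ m ≠ j := by
  constructor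
  · rintro ⟨τ, -, hag, rfl⟩ m hm h
    rw [← hag m hm] at h
    have := τ.injective h
    subst this
    exact lt_irrefl _ hm
  · intro h
    have hk : (i : ℕ) ≤ (σ.symm j : ℕ) := by
      by_contra! hlt
      exact h _ hlt (σ.apply_symm_apply j)
    -- Exchange the entries at `i` and at the position `σ⁻¹ j ≥ i` of `j`: moving
    -- `σ i` to a later position preserves its bound, and `j` satisfies its own by `hij`.
    refine ⟨(Equiv.swap i (σ.symm j)).trans σ, ?_, ?_, ?_⟩
    · intro m
      rw [Equiv.trans_apply, Equiv.swap_apply_def]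
      split_ifs with h1 h2
      · subst h1
        simpa using hij
      · subst h2
        have := hadm i
        omega
      · exact hadm m
    · intro m hm
      rw [Equiv.trans_apply, Equiv.swap_apply_of_ne_of_ne]
      · rintro rfl
        exact lt_irrefl _ hm
      · rintro rfl
        omega
    · simp
end

section
/- Let n ≥ 2, let σ be an admissible permutation of {1,…,n}, and for 1 ≤ i ≤ n let S_i = { j : there exists an admissible permutation τ of {1,…,n} with τ(m) = σ(m) for all m < i and τ(i) = j } be the set of immediate successors at position i. Then: (i) for every 1 ≤ i ≤ n − 1 the set S_i has exactly two elements, one of which is i + 1 (a non-standard value); (ii) for i = n the set S_n has exactly one element, and this element is ≤ n (a standard value). -/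
/-!
An admissible `σ` maps the positions below `i` into `{0, …, i}`, so exactly one value `a ≤ i`
is left over there. The canonical completion `τ` of the initial string of `σ` sends `i` to `a` and
fixes everything beyond `i` (`exists_completion`); composing it with the transposition of `i` and
`i + 1` gives a completion with value `i + 1` at `i`. Conversely, every admissible completion
takes one of the two values `a` and `i + 1` at `i` (`apply_eq_or_eq_succ`).
-/

/-- The set of immediate successors at position `i` of (the initial string of) an
admissible permutation `σ` of `Fin n` (0-based: `σ m ≤ m + 1`). -/
def succSet (n : ℕ) (σ : Equiv.Perm (Fin n)) (i : Fin n) : Finset (Fin n) :=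
  Finset.univ.filter (fun j : Fin n =>
    ∃ τ : Equiv.Perm (Fin n),
      (∀ m : Fin n, (τ m : ℕ) ≤ (m : ℕ) + 1) ∧
      (∀ m : Fin n, (m : ℕ) < (i : ℕ) → τ m = σ m) ∧ τ i = j)

/-- A permutation fixing every position beyond `i` takes a standard value at `i`. -/
lemma apply_le_of_fixes {n : ℕ} {τ : Equiv.Perm (Fin n)} {i : Fin n}
    (hfix : ∀ m, i < m → τ m = m) : τ i ≤ i := by
  by_contra! h
  have h2 := τ.injective (hfix _ h)
  exact h.ne' h2

/-- If `τ` fixes every position beyond `i`, the only value `≤ i` that it does not take before `i`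
is `τ i`; hence this is the only standard value at `i` open to a permutation `ρ` agreeing with `τ`
before `i`. -/
lemma apply_eq_or_eq_succ {n : ℕ} {τ ρ : Equiv.Perm (Fin n)} {i : Fin n}
    (hfix : ∀ m, i < m → τ m = m) (hρ : (ρ i : ℕ) ≤ (i : ℕ) + 1)
    (hagree : ∀ m, m < i → ρ m = τ m) : ρ i = τ i ∨ (ρ i : ℕ) = (i : ℕ) + 1 := by
  by_cases hs : (ρ i : ℕ) = (i : ℕ) + 1
  · exact Or.inr hs
  left
  have hle : ρ i ≤ i := Fin.le_def.2 (by omega)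
  obtain ⟨k, hk⟩ := τ.surjective (ρ i)
  rcases lt_trichotomy k i with h | h | h
  · exact absurd (ρ.injective ((hagree k h).trans hk)) h.ne
  · rw [← hk, h]
  · rw [hfix k h] at hk
    exact absurd (hk ▸ hle) (not_le.2 h)

/-- The initial string of `σ` before position `i` extends to a permutation fixing every position
beyond `i`. Passing from `i` to `i + 1` requires a change only if `σ` is non-standard at `i`, and
then composing with the transposition of `i` and `i + 1` suffices. -/
lemma exists_completion {n : ℕ} {σ : Equiv.Perm (Fin n)}
    (hadm : ∀ i : Fin n, (σ i : ℕ) ≤ (i : ℕ) + 1) (k : ℕ) (hk : k < n) :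
    ∃ τ : Equiv.Perm (Fin n), (∀ m, m < ⟨k, hk⟩ → τ m = σ m) ∧ ∀ m, ⟨k, hk⟩ < m → τ m = m := by
  induction k with
  | zero => exact ⟨1, fun m hm => absurd (Fin.lt_def.1 hm) (Nat.not_lt_zero _), fun _ _ => rfl⟩
  | succ k ih =>
    have hk' : k < n := by omega
    obtain ⟨τ, hτ, hfix⟩ := ih hk'
    rcases apply_eq_or_eq_succ hfix (hadm ⟨k, hk'⟩) (fun m hm => (hτ m hm).symm) with h | h
    · refine ⟨τ, fun m hm => ?_, fun m hm => hfix m ?_⟩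
      · rcases eq_or_ne m ⟨k, hk'⟩ with rfl | hne
        · exact h.symm
        · refine hτ m ?_
          simp only [Fin.lt_def, ne_eq, Fin.ext_iff] at *
          omega
      · simp only [Fin.lt_def] at *
        omega
    · refine ⟨τ * Equiv.swap ⟨k, hk'⟩ ⟨k + 1, hk⟩, fun m hm => ?_, fun m hm => ?_⟩
      · rcases eq_or_ne m ⟨k, hk'⟩ with rfl | hne
        · rw [Equiv.Perm.mul_apply, Equiv.swap_apply_left, hfix _ (Fin.lt_def.2 k.lt_succ_self)]
          exact Fin.ext h.symm
        · rw [Equiv.Perm.mul_apply, Equiv.swap_apply_of_ne_of_ne hne hm.ne]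
          refine hτ m ?_
          simp only [Fin.lt_def, ne_eq, Fin.ext_iff] at *
          omega
      · have hm' : (⟨k, hk'⟩ : Fin n) < m := by
          simp only [Fin.lt_def] at *
          omega
        rw [Equiv.Perm.mul_apply, Equiv.swap_apply_of_ne_of_ne hm'.ne' hm.ne', hfix m hm']

/-- (i) At every position `i` before the last one, an admissible permutation has
exactly two immediate successors, one of which is the non-standard value `i + 1`;
(ii) at the last position there is exactly one immediate successor, and it is a
standard value (`≤` the position). (All 0-based: position `i : Fin n` corresponds
to the 1-based position `i + 1`.) -/
theorem immediate_successors_card (n : ℕ) (hn : 2 ≤ n) (σ : Equiv.Perm (Fin n))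
    (hadm : ∀ i : Fin n, (σ i : ℕ) ≤ (i : ℕ) + 1) :
    (∀ i : Fin n, ∀ hi : (i : ℕ) < n - 1,
        (succSet n σ i).card = 2 ∧
        (⟨(i : ℕ) + 1, by omega⟩ : Fin n) ∈ succSet n σ i)
    ∧ (∀ i : Fin n, (i : ℕ) = n - 1 →
        (succSet n σ i).card = 1 ∧
        ∀ j ∈ succSet n σ i, (j : ℕ) ≤ (i : ℕ)) := by
  have key : ∀ i : Fin n, ∃ a : Fin n, a ≤ i ∧ a ∈ succSet n σ i ∧
      (∀ j ∈ succSet n σ i, j = a ∨ (j : ℕ) = (i : ℕ) + 1) ∧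
      ∀ h : (i : ℕ) + 1 < n, (⟨(i : ℕ) + 1, h⟩ : Fin n) ∈ succSet n σ i := by
    intro i
    obtain ⟨τ, hτ, hfix⟩ := exists_completion hadm i i.isLt
    have hle : τ i ≤ i := apply_le_of_fixes hfix
    have hτadm : ∀ m : Fin n, (τ m : ℕ) ≤ (m : ℕ) + 1 := by
      intro m
      rcases lt_trichotomy m i with h | rfl | h
      · rw [hτ m h]
        exact hadm m
      · exact (Fin.le_def.1 hle).trans (Nat.le_succ _)
      · rw [hfix m h]
        exact Nat.le_succ _
    refine ⟨τ i, hle, ?_, ?_, fun h => ?_⟩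
    · exact Finset.mem_filter.2 ⟨Finset.mem_univ _, τ, hτadm, hτ, rfl⟩
    · intro j hj
      obtain ⟨-, ρ, hρ, hρσ, rfl⟩ := Finset.mem_filter.1 hj
      exact apply_eq_or_eq_succ hfix (hρ i) fun m hm => (hρσ m hm).trans (hτ m hm).symm
    · have hlt : i < ⟨(i : ℕ) + 1, h⟩ := Fin.lt_def.2 (Nat.lt_succ_self _)
      refine Finset.mem_filter.2 ⟨Finset.mem_univ _, τ * Equiv.swap i ⟨(i : ℕ) + 1, h⟩,
        fun m => ?_, fun m hm => ?_, ?_⟩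
      · rw [Equiv.Perm.mul_apply]
        rcases eq_or_ne m i with rfl | h1
        · rw [Equiv.swap_apply_left, hfix _ hlt]
        · rcases eq_or_ne m ⟨(i : ℕ) + 1, h⟩ with rfl | h2
          · rw [Equiv.swap_apply_right]
            have := Fin.le_def.1 hle
            simp only
            omega
          · rw [Equiv.swap_apply_of_ne_of_ne h1 h2]
            exact hτadm m
      · have hm' : m < i := hm
        rw [Equiv.Perm.mul_apply, Equiv.swap_apply_of_ne_of_ne hm'.ne (hm'.trans hlt).ne, hτ m hm']
      · rw [Equiv.Perm.mul_apply, Equiv.swap_apply_left, hfix _ hlt]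
  refine ⟨fun i hi => ?_, fun i hi => ?_⟩
  · obtain ⟨a, hai, ha, hcases, hsucc⟩ := key i
    have h : (i : ℕ) + 1 < n := by omega
    refine ⟨Finset.card_eq_two.2 ⟨a, ⟨(i : ℕ) + 1, h⟩, ?_, ?_⟩, hsucc h⟩
    · rintro rfl
      exact absurd (Fin.le_def.1 hai) (Nat.not_succ_le_self _)
    · ext j
      rw [Finset.mem_insert, Finset.mem_singleton]
      refine ⟨fun hj => (hcases j hj).imp_right fun e => Fin.ext e, ?_⟩
      rintro (rfl | rfl)
      · exact ha
      · exact hsucc h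
  · obtain ⟨a, hai, ha, hcases, -⟩ := key i
    -- At the last position the value `i + 1 = n` is out of range, so only `a` remains.
    have huniq : ∀ j ∈ succSet n σ i, j = a := fun j hj =>
      (hcases j hj).resolve_right fun e => by omega
    refine ⟨Finset.card_eq_one.2 ⟨a, Finset.eq_singleton_iff_unique_mem.2 ⟨ha, huniq⟩⟩, ?_⟩
    intro j hj
    rw [huniq j hj]
    exact hai
end

section
/- Let σ be an admissible permutation of {1,…,n}, let 3 ≤ i ≤ n and 1 ≤ k ≤ i − 2. If σ(i−k−1) ≤ i − k − 1 (position i−k−1 is standard), σ(m) = m + 1 for every m with i − k ≤ m ≤ i − 1 (the k positions i−k,…,i−1 are non-standard), and σ(i) ≤ i (position i is standard), then σ(i) = i − k. -/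
/-!
Put `a = i - k - 1`. Admissibility together with standardness of `a` makes `σ` map the initial
segment `{0, …, a}` into itself, hence onto itself by finiteness (`mem_Iic_of_apply_mem_Iic`).
So `σ i` is not a value in `{0, …, a}`, as `i > a`. Nor is it one of `i - k + 1, …, i`, which are
the values at the non-standard positions `i - k, …, i - 1`. As `σ i ≤ i`, only `i - k` remains.
-/

/-- A permutation of a finite set that maps an initial segment into itself maps its complement
into its complement. -/
lemma mem_Iic_of_apply_mem_Iic {n : ℕ} (σ : Equiv.Perm (Fin n)) (a : Fin n)
    (h : ∀ m ≤ a, σ m ≤ a) (j : Fin n) (hj : σ j ≤ a) : j ≤ a := by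
  have hsub : (Finset.Iic a).map σ.toEmbedding ⊆ Finset.Iic a := by
    intro x hx
    obtain ⟨m, hm, rfl⟩ := Finset.mem_map.1 hx
    exact Finset.mem_Iic.2 (h m (Finset.mem_Iic.1 hm))
  have heq := Finset.eq_of_subset_of_card_le hsub (Finset.card_map _).ge
  have hmem : σ j ∈ (Finset.Iic a).map σ.toEmbedding := by
    rw [heq]
    exact Finset.mem_Iic.2 hj
  obtain ⟨m, hm, hmj⟩ := Finset.mem_map.1 hmem
  exact σ.injective hmj ▸ Finset.mem_Iic.1 hm


/-- If `σ` is an admissible permutation of `Fin n` (0-based: `σ m ≤ m + 1`),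
position `i - k - 1` is standard, the `k` consecutive positions `i - k, …, i - 1`
are all non-standard (`σ m = m + 1`) and position `i` is standard (`σ i ≤ i`),
then `σ i = i - k`. (0-based position `i : Fin n` with `2 ≤ i` corresponds to the
1-based position `i + 1 ≥ 3`, and `1 ≤ k ≤ i - 1` to the 1-based `1 ≤ k ≤ (i+1) - 2`.) -/
theorem standard_successor_after_k_nonstandard (n : ℕ) (σ : Equiv.Perm (Fin n))
    (hadm : ∀ i : Fin n, (σ i : ℕ) ≤ (i : ℕ) + 1)
    (i : Fin n) (k : ℕ) (hi : 2 ≤ (i : ℕ)) (hk1 : 1 ≤ k) (hk2 : k ≤ (i : ℕ) - 1)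
    (hprev : (σ ⟨(i : ℕ) - k - 1, by have := i.isLt; omega⟩ : ℕ) ≤ (i : ℕ) - k - 1)
    (hns : ∀ m : Fin n, (i : ℕ) - k ≤ (m : ℕ) → (m : ℕ) < (i : ℕ) →
      (σ m : ℕ) = (m : ℕ) + 1)
    (hstd : (σ i : ℕ) ≤ (i : ℕ)) :
    (σ i : ℕ) = (i : ℕ) - k := by
  have hin := i.isLt
  have hlow : ¬ (σ i : ℕ) ≤ (i : ℕ) - k - 1 := by
    intro hle
    have := mem_Iic_of_apply_mem_Iic σ ⟨(i : ℕ) - k - 1, by omega⟩ (by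
      intro m hm
      rcases hm.eq_or_lt with rfl | hlt
      · exact hprev
      · have hmσ := hadm m
        simp only [Fin.lt_def, Fin.le_def] at hlt ⊢
        omega) i hle
    simp only [Fin.le_def] at this
    omega
  by_contra hne
  -- `σ i` lies in `i - k + 1, …, i`, so it is also the value at the earlier position `σ i - 1`.
  have hm := hns ⟨(σ i : ℕ) - 1, by omega⟩ (by simp only; omega) (by simp only; omega)
  have heq : σ ⟨(σ i : ℕ) - 1, by omega⟩ = σ i := by
    apply Fin.ext
    rw [hm]
    simp only
    omega
  have := congrArg Fin.val (σ.injective heq)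
  simp only at this
  omega
end

section
/- Let n ≥ 1. Define a map f from the set of admissible permutations of {1,…,n} to the set of functions r : {1,…,n} → {0,1} by f(σ) = (r_1,…,r_n) with r_i = 0 if σ(i) = i + 1 and r_i = 1 if σ(i) ≤ i. Then f is a bijection from the set of admissible permutations of {1,…,n} onto the set R_n = { r ∈ {0,1}^n : r_n = 1 } of binary arrays whose last component is 1. -/
/-!
Injectivity: if position `i` of an admissible `σ` is standard, then `σ` maps `{j | j ≤ i}` into
itself, hence onto itself, so `σ i` is the only element of `{j | j ≤ i}` not among the values
`σ j`, `j < i`. Thus an admissible permutation is determined, position by position, by its array.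

Surjectivity: cut the array `r` into blocks, each a (possibly empty) run of `0`s closed by a `1`;
since the last entry is `1`, the blocks cover every position. The permutation that cycles each
block, `i ↦ i + 1` at a `0` and back to the first position of the block at the closing `1`, is
admissible and has array `r`.
-/

theorem exists_blockStart {n : ℕ} (r : Fin n → Fin 2) (i : Fin n) :
    ∃ s : ℕ, ∀ k : Fin n, s ≤ k → k < i → r k = 0 :=
  ⟨i, fun _ h h' => absurd h' (not_lt.2 h)⟩

/-- The first position of the block of `r` containing `i`: the least `s` such that `r` vanishes
at all positions `k` with `s ≤ k < i`. -/
def blockStart {n : ℕ} (r : Fin n → Fin 2) (i : Fin n) : ℕ :=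
  Nat.find (exists_blockStart r i)

theorem blockStart_le {n : ℕ} (r : Fin n → Fin 2) (i : Fin n) : blockStart r i ≤ i :=
  Nat.find_min' (exists_blockStart r i) fun _ h h' => absurd h' (not_lt.2 h)

theorem blockStart_spec {n : ℕ} (r : Fin n → Fin 2) (i k : Fin n)
    (h : blockStart r i ≤ k) (hk : k < i) : r k = 0 :=
  Nat.find_spec (exists_blockStart r i) k h hk

/-- A block does not start immediately after a `0`. -/
theorem blockStart_ne_succ {n : ℕ} (r : Fin n → Fin 2) (i j : Fin n) (hj : r j = 0) :
    blockStart r i ≠ j + 1 := by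
  intro h
  have hle : blockStart r i ≤ j := by
    refine Nat.find_min' (exists_blockStart r i) fun k hjk hk => ?_
    rcases eq_or_lt_of_le hjk with e | l
    · rwa [← Fin.ext e]
    · exact blockStart_spec r i k (by omega) hk
  omega

/-- An admissible permutation preserves the initial segment ending at a standard position. -/
theorem exists_le_apply_eq {n : ℕ} (σ : Equiv.Perm (Fin n))
    (hσ : ∀ i : Fin n, (σ i : ℕ) ≤ (i : ℕ) + 1) (i : Fin n) (hi : σ i ≤ i)
    (x : Fin n) (hx : x ≤ i) : ∃ j ≤ i, σ j = x := by
  have hsub : (Finset.Iic i).image σ ⊆ Finset.Iic i := by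
    intro y hy
    obtain ⟨j, hj, rfl⟩ := Finset.mem_image.1 hy
    rw [Finset.mem_Iic] at hj ⊢
    rcases eq_or_lt_of_le hj with rfl | hlt
    · exact hi
    · have := hσ j
      rw [Fin.le_def]
      rw [Fin.lt_def] at hlt
      omega
  have heq := Finset.eq_of_subset_of_card_le hsub
    (Finset.card_image_of_injective _ σ.injective).ge
  have hx' : x ∈ (Finset.Iic i).image σ := by rw [heq]; exact Finset.mem_Iic.2 hx
  obtain ⟨j, hj, h⟩ := Finset.mem_image.1 hx'
  exact ⟨j, Finset.mem_Iic.1 hj, h⟩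

/-- The representation theorem: the map sending an admissible permutation `σ` of
`Fin n` (0-based: `σ i ≤ i + 1`) to the binary array `r : Fin n → Fin 2` with
`r i = 0` when position `i` is non-standard (`σ i = i + 1`) and `r i = 1` when it
is standard (`σ i ≤ i`), is a bijection from the set of admissible permutations
onto the set of binary arrays whose last component is `1`. -/
theorem admissible_perm_binary_bijection (n : ℕ) (hn : 1 ≤ n) :
    Set.BijOn
      (fun (σ : Equiv.Perm (Fin n)) (i : Fin n) =>
        if (σ i : ℕ) = (i : ℕ) + 1 then (0 : Fin 2) else 1)
      {σ : Equiv.Perm (Fin n) | ∀ i : Fin n, (σ i : ℕ) ≤ (i : ℕ) + 1}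
      {r : Fin n → Fin 2 | r ⟨n - 1, by omega⟩ = 1} := by
  refine ⟨?_, ?_, ?_⟩
  · intro σ _
    have := (σ ⟨n - 1, by omega⟩).isLt
    exact if_neg (by simp only; omega)
  · intro σ hσ τ hτ h
    have hiff : ∀ i : Fin n, (σ i : ℕ) = i + 1 ↔ (τ i : ℕ) = i + 1 := by
      intro i
      have := congrFun h i
      simp only at this
      split_ifs at this <;> simp_all
    ext1 i
    induction i using WellFoundedLT.induction with
    | ind i ih =>
      have h1 := hσ i
      have h2 := hτ i
      have h3 := hiff i
      by_cases hc : (σ i : ℕ) = i + 1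
      · exact Fin.ext (by rw [hc, h3.1 hc])
      · obtain ⟨j, hj, hji⟩ := exists_le_apply_eq σ hσ i (by rw [Fin.le_def]; omega) (τ i)
          (by rw [Fin.le_def]; omega)
        rcases eq_or_lt_of_le hj with rfl | hlt
        · exact hji
        · rw [ih j hlt] at hji
          exact absurd (τ.injective hji) hlt.ne
  · intro r hr
    rw [Set.mem_ofPred_eq] at hr
    have hlt : ∀ i : Fin n, r i = 0 → (i : ℕ) + 1 < n := by
      intro i hi
      by_contra hcon
      have : i = ⟨n - 1, by omega⟩ := Fin.ext (by simp only; omega)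
      rw [this, hr] at hi
      exact absurd hi (by decide)
    let g : Fin n → Fin n := fun i =>
      if h : r i = 0 then ⟨i + 1, hlt i h⟩
      else ⟨blockStart r i, (blockStart_le r i).trans_lt i.isLt⟩
    have g0 : ∀ i, r i = 0 → (g i : ℕ) = i + 1 := fun i h => by simp [g, h]
    have g1 : ∀ i, r i ≠ 0 → (g i : ℕ) = blockStart r i := fun i h => by simp [g, h]
    -- Distinct closing positions lie in distinct blocks.
    have key : ∀ i j, r i ≠ 0 → i < j → blockStart r i ≠ blockStart r j := fun i j hi hij e =>
      hi (blockStart_spec r j i (e ▸ blockStart_le r i) hij)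
    have ginj : Function.Injective g := by
      intro i j hij
      have hv : (g i : ℕ) = g j := by rw [hij]
      by_cases hi : r i = 0 <;> by_cases hj : r j = 0
      · rw [g0 i hi, g0 j hj] at hv
        exact Fin.ext (by omega)
      · rw [g0 i hi, g1 j hj] at hv
        exact absurd hv.symm (blockStart_ne_succ r j i hi)
      · rw [g1 i hi, g0 j hj] at hv
        exact absurd hv (blockStart_ne_succ r i j hj)
      · rw [g1 i hi, g1 j hj] at hv
        rcases lt_trichotomy i j with l | e | l
        · exact absurd hv (key i j hi l)
        · exact e
        · exact absurd hv.symm (key j i hj l)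
    refine ⟨Equiv.ofBijective g (Finite.injective_iff_bijective.1 ginj), ?_, ?_⟩
    · intro i
      rw [Equiv.ofBijective_apply]
      by_cases hi : r i = 0
      · exact (g0 i hi).le
      · rw [g1 i hi]
        exact (blockStart_le r i).trans (Nat.le_succ _)
    · funext i
      simp only [Equiv.ofBijective_apply]
      by_cases hi : r i = 0
      · rw [if_pos (g0 i hi), hi]
      · have := blockStart_le r i
        rw [if_neg (by rw [g1 i hi]; omega)]
        exact (Fin.eq_one_of_ne_zero _ hi).symm
end
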